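/- Let n be a positive integer and let M and N be real 2n×2n matrices in the split orthogonal group O(n,n) with det(M₁₁) > 0, det(M₂₂) > 0, det(N₁₁) > 0 and det(N₂₂) > 0. Then the product MN also satisfies det((MN)₁₁) > 0 and det((MN)₂₂) > 0; that is, the component O⁺⁺(n,n) is closed under matrix multiplication. -/

import Mathlib

/-!
Call a block column `[P; Q]` spacelike if `Pᵀ P - Qᵀ Q` is positive definite. Its upper block `P` is
then invertible, and `M ∈ O(p, q)` maps spacelike columns to spacelike columns. If `[P; Q]` is
spacelike, so is `[P; t Q]` for `0 ≤ t ≤ 1`; the determinant of the upper block of `M [P; t Q]`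
therefore never vanishes on `[0, 1]`, and its sign at `t = 1` equals its sign at `t = 0`, where the
upper block is `M₁₁ P`. Taking `[P; Q]` to be the first block column of `N` shows that
`sign (det M₁₁)` is multiplicative on `O(p, q)`. Exchanging the two blocks turns `O(p, q)` into
`O(q, p)`, which settles the lower right block.
-/

open Matrix

/-- The metric `η = diag(I_n, -I_n)` as a `2n × 2n` real matrix. -/
noncomputable def splitMetric (n : ℕ) : Matrix (Fin n ⊕ Fin n) (Fin n ⊕ Fin n) ℝ :=
  Matrix.fromBlocks 1 0 0 (-1)

theorem sign_eq_of_isPreconnected {X α : Type*} [TopologicalSpace X] [TopologicalSpace α]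
    [LinearOrder α] [OrderTopology α] [Zero α] {s : Set X} (hs : IsPreconnected s) {f : X → α}
    (hf : ContinuousOn f s) (hf0 : ∀ x ∈ s, f x ≠ 0) {x y : X} (hx : x ∈ s) (hy : y ∈ s) :
    SignType.sign (f x) = SignType.sign (f y) :=
  hs.constant (fun z hz => (continuousAt_sign_of_ne_zero (hf0 z hz)).comp_continuousWithinAt
    (hf z hz)) hx hy

theorem toRows₁_mul_fromRows {k l m p q R : Type*} [Fintype p] [Fintype q] [Semiring R]
    (M : Matrix (k ⊕ l) (p ⊕ q) R) (P : Matrix p m R) (Q : Matrix q m R) :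
    (M * fromRows P Q).toRows₁ = M.toBlocks₁₁ * P + M.toBlocks₁₂ * Q := by
  conv_lhs => rw [← fromBlocks_toBlocks M, fromBlocks_mul_fromRows, toRows₁_fromRows]

section IndefiniteOrthogonal

open LieAlgebra.Orthogonal

variable {p q m R : Type*} [DecidableEq p] [DecidableEq q]

theorem indefiniteDiagonal_eq_fromBlocks [CommRing R] :
    indefiniteDiagonal p q R = fromBlocks 1 0 0 (-1) := by
  rw [← diagonal_one, ← diagonal_one, diagonal_neg, fromBlocks_diagonal]
  rfl

theorem indefiniteDiagonal_submatrix_sumComm [CommRing R] :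
    (indefiniteDiagonal p q R).submatrix (Equiv.sumComm q p) (Equiv.sumComm q p) =
      -indefiniteDiagonal q p R := by
  simp [indefiniteDiagonal_eq_fromBlocks, fromBlocks_neg]

variable [Fintype p] [Fintype q]

/-- Membership in the indefinite orthogonal group `O(p, q)` over `R`, as an equation on matrices
with rows and columns indexed by `p ⊕ q`, the metric being Mathlib's `indefiniteDiagonal`. -/
def IsIndefiniteOrthogonal [CommRing R] (M : Matrix (p ⊕ q) (p ⊕ q) R) : Prop :=
  Mᵀ * indefiniteDiagonal p q R * M = indefiniteDiagonal p q R

/-- The columns of `W` are linearly independent and span a subspace on which the form of signature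
`(p, q)` is positive definite, encoded by their Gram matrix. The notion serves to keep the upper
block of a path of such `W` invertible. -/
def IsSpacelike (W : Matrix (p ⊕ q) m ℝ) : Prop :=
  (Wᵀ * indefiniteDiagonal p q ℝ * W).PosDef

theorem isSpacelike_iff_posDef_toRows {W : Matrix (p ⊕ q) m ℝ} :
    IsSpacelike W ↔ (W.toRows₁ᵀ * W.toRows₁ - W.toRows₂ᵀ * W.toRows₂).PosDef := by
  have hgram : Wᵀ * indefiniteDiagonal p q ℝ * W =
      W.toRows₁ᵀ * W.toRows₁ - W.toRows₂ᵀ * W.toRows₂ := by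
    conv_lhs => rw [← fromRows_toRows W]
    simp [-fromRows_toRows, indefiniteDiagonal_eq_fromBlocks, transpose_fromRows,
      fromCols_mul_fromBlocks, fromCols_mul_fromRows, sub_eq_add_neg]
  rw [IsSpacelike, hgram]

namespace IsSpacelike

theorem det_toRows₁_ne_zero {W : Matrix (p ⊕ q) p ℝ} (hW : IsSpacelike W) :
    W.toRows₁.det ≠ 0 := by
  have hpos : (W.toRows₁ᵀ * W.toRows₁).PosDef := by
    simpa using (isSpacelike_iff_posDef_toRows.mp hW).add_posSemidef
      (posSemidef_conjTranspose_mul_self W.toRows₂)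
  simpa using hpos.det_pos.ne'

theorem fromRows_smul_toRows₂ [Finite m] {W : Matrix (p ⊕ q) m ℝ} (hW : IsSpacelike W) {t : ℝ}
    (ht : |t| ≤ 1) : IsSpacelike (fromRows W.toRows₁ (t • W.toRows₂)) := by
  rw [isSpacelike_iff_posDef_toRows] at hW ⊢
  have hsemi : ((1 - t ^ 2) • (W.toRows₂ᵀ * W.toRows₂)).PosSemidef :=
    (posSemidef_conjTranspose_mul_self W.toRows₂).smul
      (sub_nonneg.mpr ((sq_le_one_iff_abs_le_one t).mpr ht))
  convert hW.add_posSemidef hsemi using 1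
  simp only [toRows₁_fromRows, toRows₂_fromRows, transpose_smul, Matrix.smul_mul, Matrix.mul_smul]
  module

end IsSpacelike

namespace IsIndefiniteOrthogonal

theorem submatrix_sumComm [CommRing R] {M : Matrix (p ⊕ q) (p ⊕ q) R}
    (hM : IsIndefiniteOrthogonal M) :
    IsIndefiniteOrthogonal (M.submatrix (Equiv.sumComm q p) (Equiv.sumComm q p)) := by
  rw [IsIndefiniteOrthogonal, ← neg_inj, ← indefiniteDiagonal_submatrix_sumComm, ← hM]
  simp only [← submatrix_mul_equiv _ _ _ (Equiv.sumComm q p) _, transpose_submatrix,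
    indefiniteDiagonal_submatrix_sumComm, Matrix.mul_neg, Matrix.neg_mul]

variable {M N : Matrix (p ⊕ q) (p ⊕ q) ℝ}

theorem isSpacelike_mul (hM : IsIndefiniteOrthogonal M) {W : Matrix (p ⊕ q) m ℝ}
    (hW : IsSpacelike W) : IsSpacelike (M * W) := by
  have hgram : (M * W)ᵀ * indefiniteDiagonal p q ℝ * (M * W) =
      Wᵀ * indefiniteDiagonal p q ℝ * W := by
    calc (M * W)ᵀ * indefiniteDiagonal p q ℝ * (M * W)
        = Wᵀ * (Mᵀ * indefiniteDiagonal p q ℝ * M) * W := by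
          simp only [transpose_mul, Matrix.mul_assoc]
      _ = Wᵀ * indefiniteDiagonal p q ℝ * W := by rw [hM]
  rwa [IsSpacelike, hgram]

theorem isSpacelike_toCols₁ (hM : IsIndefiniteOrthogonal M) : IsSpacelike M.toCols₁ := by
  have hgram : M.toCols₁ᵀ * indefiniteDiagonal p q ℝ * M.toCols₁ = 1 :=
    calc M.toCols₁ᵀ * indefiniteDiagonal p q ℝ * M.toCols₁
        = (Mᵀ * indefiniteDiagonal p q ℝ * M).toBlocks₁₁ := rfl
      _ = 1 := by rw [hM, indefiniteDiagonal_eq_fromBlocks, toBlocks_fromBlocks₁₁]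
  rw [IsSpacelike, hgram]
  exact .one

theorem sign_det_toRows₁_mul (hM : IsIndefiniteOrthogonal M) {W : Matrix (p ⊕ q) p ℝ}
    (hW : IsSpacelike W) :
    SignType.sign (M * W).toRows₁.det =
      SignType.sign M.toBlocks₁₁.det * SignType.sign W.toRows₁.det := by
  let path (t : ℝ) : Matrix p p ℝ := (M * fromRows W.toRows₁ (t • W.toRows₂)).toRows₁
  have path_eq (t : ℝ) :
      path t = M.toBlocks₁₁ * W.toRows₁ + M.toBlocks₁₂ * (t • W.toRows₂) :=
    toRows₁_mul_fromRows M _ _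
  have path_zero : path 0 = M.toBlocks₁₁ * W.toRows₁ := by simp [path_eq]
  have path_one : path 1 = (M * W).toRows₁ := by simp [path]
  have path_continuous : Continuous path := by
    simp only [funext path_eq]
    fun_prop
  have det_path_ne_zero (t : ℝ) (ht : t ∈ Set.Icc 0 1) : (path t).det ≠ 0 :=
    (hM.isSpacelike_mul (hW.fromRows_smul_toRows₂
      ((abs_of_nonneg ht.1).trans_le ht.2))).det_toRows₁_ne_zero
  calc SignType.sign (M * W).toRows₁.det
      = SignType.sign (path 1).det := by rw [path_one]
    _ = SignType.sign (path 0).det :=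
        sign_eq_of_isPreconnected isPreconnected_Icc path_continuous.matrix_det.continuousOn
          det_path_ne_zero (Set.right_mem_Icc.mpr zero_le_one) (Set.left_mem_Icc.mpr zero_le_one)
    _ = SignType.sign M.toBlocks₁₁.det * SignType.sign W.toRows₁.det := by
        rw [path_zero, det_mul, sign_mul]

theorem sign_det_toBlocks₁₁_mul (hM : IsIndefiniteOrthogonal M) (hN : IsIndefiniteOrthogonal N) :
    SignType.sign (M * N).toBlocks₁₁.det =
      SignType.sign M.toBlocks₁₁.det * SignType.sign N.toBlocks₁₁.det :=
  hM.sign_det_toRows₁_mul hN.isSpacelike_toCols₁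

theorem sign_det_toBlocks₂₂_mul (hM : IsIndefiniteOrthogonal M) (hN : IsIndefiniteOrthogonal N) :
    SignType.sign (M * N).toBlocks₂₂.det =
      SignType.sign M.toBlocks₂₂.det * SignType.sign N.toBlocks₂₂.det := by
  have hswap := hM.submatrix_sumComm.sign_det_toBlocks₁₁_mul hN.submatrix_sumComm
  rwa [submatrix_mul_equiv] at hswap

end IsIndefiniteOrthogonal

theorem Opp_mul_closed_general {M N : Matrix (p ⊕ q) (p ⊕ q) ℝ}
    (hM : IsIndefiniteOrthogonal M) (hN : IsIndefiniteOrthogonal N)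
    (hM11 : 0 < M.toBlocks₁₁.det) (hM22 : 0 < M.toBlocks₂₂.det)
    (hN11 : 0 < N.toBlocks₁₁.det) (hN22 : 0 < N.toBlocks₂₂.det) :
    0 < (M * N).toBlocks₁₁.det ∧ 0 < (M * N).toBlocks₂₂.det := by
  constructor
  · rw [← sign_eq_one_iff, hM.sign_det_toBlocks₁₁_mul hN, sign_pos hM11, sign_pos hN11, one_mul]
  · rw [← sign_eq_one_iff, hM.sign_det_toBlocks₂₂_mul hN, sign_pos hM22, sign_pos hN22, one_mul]

end IndefiniteOrthogonal

theorem splitMetric_eq_indefiniteDiagonal (n : ℕ) :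
    splitMetric n = LieAlgebra.Orthogonal.indefiniteDiagonal (Fin n) (Fin n) ℝ :=
  indefiniteDiagonal_eq_fromBlocks.symm

theorem Opp_mul_closed (n : ℕ) (hn : 0 < n)
    (M N : Matrix (Fin n ⊕ Fin n) (Fin n ⊕ Fin n) ℝ)
    (hM : Mᵀ * splitMetric n * M = splitMetric n)
    (hN : Nᵀ * splitMetric n * N = splitMetric n)
    (hM11 : 0 < M.toBlocks₁₁.det) (hM22 : 0 < M.toBlocks₂₂.det)
    (hN11 : 0 < N.toBlocks₁₁.det) (hN22 : 0 < N.toBlocks₂₂.det) :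
    0 < (M * N).toBlocks₁₁.det ∧ 0 < (M * N).toBlocks₂₂.det := by
  rw [splitMetric_eq_indefiniteDiagonal] at hM hN
  exact Opp_mul_closed_general hM hN hM11 hM22 hN11 hN22
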